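/- arXiv:2210.12869 — 2 statements merged into one kernel-verified Lean document; each statement's English description precedes it below -/
import Mathlib

section
/- For priors π_0 ∈ (0,1) on H_0 and 1 − π_0 on H_1, with error probability P_E^{π_0}(φ; P_0, P_1) = π_0 E_{P_0}[φ] + (1 − π_0) E_{P_1}[1 − φ], the minimax identity inf_φ sup_{P_0 ∈ 𝒫_0^η, P_1 ∈ 𝒫_1^η} P_E^{π_0}(φ; P_0, P_1) = sup_{P_0 ∈ 𝒫_0^η, P_1 ∈ 𝒫_1^η} ∫_X min{π_0 p_0(x), (1 − π_0) p_1(x)} dμ(x) holds, where the infimum is over measurable tests φ : X → [0,1] and p_0, p_1 are densities of P_0, P_1 with respect to a common reference measure μ. -/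
open MeasureTheory

/-- The moment-constrained uncertainty set around nominal `Qhat` with radius `η`. -/
def momentSet {d : ℕ} (X : Set (EuclideanSpace ℝ (Fin d))) {K : ℕ}
    (ψ : Fin K → X → ℝ) (Qhat : ProbabilityMeasure X) (η : ℝ) :
    Set (ProbabilityMeasure X) :=
  {P | ∀ k, |∫ x, ψ k x ∂(P : Measure X) - ∫ x, ψ k x ∂(Qhat : Measure X)| ≤ η}

/-! Replace the reference measure `μ` by an equivalent finite measure `ν`. The classes in `L²(ν)`
with values in `[0, 1]` form a bounded closed convex set, which is weakly compact, and the risk is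
affine and continuous in the test and affine in the pair of measures. Sion's theorem therefore
exchanges the infimum over tests with the supremum over the uncertainty sets. For a fixed pair the
infimum over tests is attained by the likelihood ratio test, which pays the smaller of the two
weighted densities at every point. -/

open Filter Set Bornology
open scoped NNReal ENNReal Topology

theorem exists_mem_forall_lt_of_isCompact {E : Type*} [TopologicalSpace E] [AddCommGroup E]
    [Module ℝ E] [IsTopologicalAddGroup E] [ContinuousSMul ℝ E] {s : Set E} (hne : s.Nonempty)
    (hconv : Convex ℝ s) (hs : IsCompact s) {𝓕 : Set (E → ℝ)} (h𝓕 : Convex ℝ 𝓕)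
    (hlsc : ∀ f ∈ 𝓕, LowerSemicontinuousOn f s) (hquasi : ∀ f ∈ 𝓕, QuasiconvexOn ℝ s f)
    {c : ℝ} (h : ∀ x ∈ s, ∃ f ∈ 𝓕, c < f x) : ∃ f ∈ 𝓕, ∀ x ∈ s, c < f x := by
  choose! F hF hcF using h
  obtain ⟨t, hts, hst⟩ := hs.elim_nhdsWithin_subcover (fun x => {y | c < F x y})
    fun x hx => hlsc (F x) (hF x hx) x hx c (hcF x hx)
  -- In the topology of pointwise convergence on `𝓕` every evaluation is continuous and linear.
  refine Sion.exists_lt_iInf_of_lt_iInf_of_finite (f := fun x g => g x) hne hs hlsc hquasi h𝓕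
    (fun x _ => (continuous_apply x).upperSemicontinuous.upperSemicontinuousOn _)
    (fun x _ => ((LinearMap.proj x : (E → ℝ) →ₗ[ℝ] ℝ).concaveOn h𝓕).quasiconcaveOn) hconv
    (t.finite_toSet.image F) (image_subset_iff.2 fun x hx => hF x (hts x hx)) fun y hy => ?_
  obtain ⟨x, hx, hxy⟩ := mem_iUnion₂.1 (hst hy)
  exact ⟨F x, mem_image_of_mem F hx, hxy⟩

section WeakTopology

theorem quasiconvexOn_image_of_comp {𝕜 E F β : Type*} [Semiring 𝕜] [PartialOrder 𝕜]
    [AddCommMonoid E] [Module 𝕜 E] [AddCommMonoid F] [Module 𝕜 F] [LE β] (L : E →ₗ[𝕜] F)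
    {s : Set E} {g : F → β} (hg : QuasiconvexOn 𝕜 s (g ∘ L)) :
    QuasiconvexOn 𝕜 (L '' s) g := fun b => by
  have himage : L '' {x ∈ s | (g ∘ L) x ≤ b} = {y ∈ L '' s | g y ≤ b} :=
    image_inter_preimage L s {y | g y ≤ b}
  exact himage ▸ (hg b).linear_image L

section LocallyConvex

variable {E : Type*} [AddCommGroup E] [Module ℝ E] [TopologicalSpace E] [IsTopologicalAddGroup E]
  [ContinuousSMul ℝ E] [LocallyConvexSpace ℝ E] {s : Set E}

theorem isClosed_toWeakSpace_image (hs : IsClosed s) (hconv : Convex ℝ s) :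
    IsClosed (toWeakSpace ℝ E '' s) := by
  rw [← hs.closure_eq, hconv.toWeakSpace_closure ℝ]
  exact isClosed_closure

theorem lowerSemicontinuousOn_toWeakSpace_image {g : WeakSpace ℝ E → ℝ} (hs : IsClosed s)
    (hquasi : QuasiconvexOn ℝ s (g ∘ toWeakSpace ℝ E))
    (hlsc : LowerSemicontinuousOn (g ∘ toWeakSpace ℝ E) s) :
    LowerSemicontinuousOn g (toWeakSpace ℝ E '' s) := by
  -- Sublevel sets are closed and convex, hence weakly closed by Mazur's theorem.
  refine lowerSemicontinuousOn_iff_preimage_Iic.2 fun b =>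
    ⟨toWeakSpace ℝ E '' (s ∩ toWeakSpace ℝ E ⁻¹' (g ⁻¹' Iic b)),
      isClosed_toWeakSpace_image ?_ (hquasi b), by
        rw [image_inter_preimage, ← inter_assoc, inter_self]⟩
  obtain ⟨v, hv, hsv⟩ := lowerSemicontinuousOn_iff_preimage_Iic.1 hlsc b
  rw [← preimage_comp, hsv]
  exact hs.inter hv

end LocallyConvex

variable {H : Type*} [NormedAddCommGroup H] [InnerProductSpace ℝ H] [CompleteSpace H]

theorem inclusionInDoubleDual_surjective :
    Function.Surjective (NormedSpace.inclusionInDoubleDual ℝ H) := by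
  intro L
  let D : H ≃L[ℝ] StrongDual ℝ H := (InnerProductSpace.toDual ℝ H).toContinuousLinearEquiv
  refine ⟨D.symm (L ∘L D), ContinuousLinearMap.ext fun f => ?_⟩
  obtain ⟨y, rfl⟩ := D.surjective f
  calc D y (D.symm (L ∘L D)) = D (D.symm (L ∘L D)) y := real_inner_comm _ _
    _ = L (D y) := by simp

theorem isCompact_toWeakSpace_image {s : Set H} (hs : IsClosed s) (hconv : Convex ℝ s)
    (hbdd : IsBounded s) : IsCompact (toWeakSpace ℝ H '' s) := by
  rw [← (isClosed_toWeakSpace_image hs hconv).closure_eq]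
  refine NormedSpace.isCompact_closure_of_isBounded ℝ H _ ?_ fun L _ => ?_
  · rwa [preimage_image_eq _ (toWeakSpace ℝ H).injective]
  · exact inclusionInDoubleDual_surjective L

theorem exists_mem_forall_lt_of_isClosed_of_isBounded {s : Set H} (hne : s.Nonempty)
    (hconv : Convex ℝ s) (hs : IsClosed s) (hbdd : IsBounded s) {𝓕 : Set (H → ℝ)}
    (h𝓕 : Convex ℝ 𝓕) (hlsc : ∀ f ∈ 𝓕, LowerSemicontinuousOn f s)
    (hquasi : ∀ f ∈ 𝓕, QuasiconvexOn ℝ s f) {c : ℝ} (h : ∀ x ∈ s, ∃ f ∈ 𝓕, c < f x) :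
    ∃ f ∈ 𝓕, ∀ x ∈ s, c < f x := by
  let e := toWeakSpace ℝ H
  have h𝓖 : Convex ℝ {g : WeakSpace ℝ H → ℝ | g ∘ e ∈ 𝓕} :=
    h𝓕.linear_preimage (LinearMap.funLeft ℝ ℝ e)
  obtain ⟨g, hg, hgc⟩ := exists_mem_forall_lt_of_isCompact (hne.image e)
    (hconv.linear_image e.toLinearMap) (isCompact_toWeakSpace_image hs hconv hbdd) h𝓖
    (fun g hg => lowerSemicontinuousOn_toWeakSpace_image hs (hquasi _ hg) (hlsc _ hg))
    (fun g hg => quasiconvexOn_image_of_comp e.toLinearMap (hquasi _ hg))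
    (forall_mem_image.2 fun x hx =>
      let ⟨f, hf, hfx⟩ := h x hx
      ⟨f ∘ e.symm, hf, hfx⟩)
  exact ⟨g ∘ e, hg, fun x hx => hgc _ (mem_image_of_mem e hx)⟩

end WeakTopology

section Lp

variable {Ω E : Type*} [MeasurableSpace Ω] [NormedAddCommGroup E] {p : ℝ≥0∞} {ν : Measure Ω}

theorem isClosed_ae_mem_Lp [Fact (1 ≤ p)] {C : Set E} (hC : IsClosed C) :
    IsClosed {φ : Lp E p ν | ∀ᵐ x ∂ν, φ x ∈ C} := by
  refine IsSeqClosed.isClosed fun φ φ₀ hφ hlim => ?_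
  obtain ⟨n, -, hn⟩ := (tendstoInMeasure_of_tendsto_Lp hlim).exists_seq_tendsto_ae
  filter_upwards [ae_all_iff.2 hφ, hn] with x hx hlimx
  exact hC.mem_of_tendsto hlimx (.of_forall fun k => hx (n k))

theorem isBounded_ae_mem_Lp [Fact (1 ≤ p)] [IsFiniteMeasure ν] {C : Set E}
    (hC : IsBounded C) : IsBounded {φ : Lp E p ν | ∀ᵐ x ∂ν, φ x ∈ C} := by
  obtain ⟨r, hr, hCr⟩ := hC.exists_pos_norm_le
  exact isBounded_iff_forall_norm_le.2 ⟨_, fun φ hφ =>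
    Lp.norm_le_of_ae_bound hr.le (Eventually.mono hφ fun x hx => hCr _ hx)⟩

theorem convex_ae_mem_Lp [NormedSpace ℝ E] {C : Set E} (hC : Convex ℝ C) :
    Convex ℝ {φ : Lp E p ν | ∀ᵐ x ∂ν, φ x ∈ C} := by
  intro φ hφ χ hχ s t hs ht hst
  filter_upwards [hφ, hχ, Lp.coeFn_add (s • φ) (t • χ), Lp.coeFn_smul s φ, Lp.coeFn_smul t χ]
    with x hφx hχx hadd hsφ htχ
  rw [hadd, Pi.add_apply, hsφ, htχ]
  exact hC hφx hχx hs ht hst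

theorem continuous_integral_comp_Lp {F : Type*} [NormedAddCommGroup F] [NormedSpace ℝ F]
    [Fact (1 ≤ p)] {P : Measure Ω} [IsFiniteMeasure P] (hP : P ≪ ν) {g : E → F}
    (hg : Continuous g) {M : ℝ} (hM : ∀ y, ‖g y‖ ≤ M) :
    Continuous fun φ : Lp E p ν => ∫ x, g (φ x) ∂P := by
  refine continuous_iff_continuousAt.2 fun φ₀ => tendsto_of_subseq_tendsto fun φ hφ => ?_
  obtain ⟨n, -, hn⟩ := (tendstoInMeasure_of_tendsto_Lp hφ).exists_seq_tendsto_ae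
  refine ⟨n, tendsto_integral_of_dominated_convergence (fun _ => M)
    (fun k => hg.comp_aestronglyMeasurable ((Lp.aestronglyMeasurable _).mono_ac hP))
    (integrable_const M) (fun k => .of_forall fun x => hM _) ?_⟩
  filter_upwards [hP.ae_le hn] with x hx
  exact (hg.tendsto _).comp hx

end Lp

section Tests

variable {Ω : Type*} [MeasurableSpace Ω]

/-- A randomized test: `φ x` is the probability of rejecting the hypothesis `H₀` after
observing `x`. -/
structure IsTest (φ : Ω → ℝ) : Prop where
  measurable : Measurable φ
  mem_Icc : ∀ x, φ x ∈ Icc (0 : ℝ) 1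

/-- The risk of the test `φ` against the pair `(P₀, P₁)`, where `a` and `b` weigh the errors of the
first and second kind. The weights `(π₀, 1 - π₀)` give the Bayes error for the prior `π₀`. -/
noncomputable def testRisk (a b : ℝ) (P₀ P₁ : Measure Ω) (φ : Ω → ℝ) : ℝ :=
  a * ∫ x, φ x ∂P₀ + b * ∫ x, (1 - φ x) ∂P₁

/-- The truncation of a function to the values allowed for a test. It turns every measurable
representative of a class in `Lp` into a test. -/
noncomputable def unitClip {α : Type*} (φ : α → ℝ) (x : α) : ℝ :=
  projIcc (0 : ℝ) 1 zero_le_one (φ x)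

theorem isTest_unitClip {φ : Ω → ℝ} (hφ : Measurable φ) : IsTest (unitClip φ) :=
  ⟨(continuous_subtype_val.comp continuous_projIcc).measurable.comp hφ,
    fun x => (projIcc (0 : ℝ) 1 zero_le_one (φ x)).2⟩

theorem unitClip_ae_eq {P : Measure Ω} {φ : Ω → ℝ} (hφ : ∀ᵐ x ∂P, φ x ∈ Icc (0 : ℝ) 1) :
    unitClip φ =ᵐ[P] φ :=
  hφ.mono fun x hx => by rw [unitClip, projIcc_of_mem _ hx]

namespace IsTest

variable {φ : Ω → ℝ}

theorem one_sub (hφ : IsTest φ) : IsTest fun x => 1 - φ x :=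
  ⟨measurable_const.sub hφ.measurable, fun x => Icc.one_sub_mem (hφ.mem_Icc x)⟩

theorem integrable (hφ : IsTest φ) (P : Measure Ω) [IsFiniteMeasure P] : Integrable φ P :=
  .of_mem_Icc 0 1 hφ.measurable.aemeasurable (.of_forall hφ.mem_Icc)

theorem abs_integral_le_one (hφ : IsTest φ) (P : Measure Ω) [IsProbabilityMeasure P] :
    |∫ x, φ x ∂P| ≤ 1 := by
  simpa using norm_integral_le_of_norm_le_const (μ := P) (f := φ) (C := 1)
    (.of_forall fun x => abs_le.2 ⟨by linarith [(hφ.mem_Icc x).1], (hφ.mem_Icc x).2⟩)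

theorem zero : IsTest (0 : Ω → ℝ) :=
  ⟨measurable_const, fun _ => unitInterval.zero_mem⟩

end IsTest

variable {a b : ℝ} {P₀ P₁ : Measure Ω} {φ : Ω → ℝ}

theorem testRisk_congr_ae {χ : Ω → ℝ} (h₀ : φ =ᵐ[P₀] χ) (h₁ : φ =ᵐ[P₁] χ) :
    testRisk a b P₀ P₁ φ = testRisk a b P₀ P₁ χ := by
  rw [testRisk, testRisk, integral_congr_ae h₀,
    integral_congr_ae (h₁.mono fun x hx => congrArg (1 - ·) hx)]

theorem abs_testRisk_le [IsProbabilityMeasure P₀] [IsProbabilityMeasure P₁] (hφ : IsTest φ) :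
    |testRisk a b P₀ P₁ φ| ≤ |a| + |b| := by
  calc |testRisk a b P₀ P₁ φ|
      ≤ |a| * |∫ x, φ x ∂P₀| + |b| * |∫ x, (1 - φ x) ∂P₁| := by
        simpa only [testRisk, abs_mul] using
          abs_add_le (a * ∫ x, φ x ∂P₀) (b * ∫ x, (1 - φ x) ∂P₁)
    _ ≤ |a| * 1 + |b| * 1 := by
        gcongr
        · exact hφ.abs_integral_le_one P₀
        · exact hφ.one_sub.abs_integral_le_one P₁
    _ = |a| + |b| := by ring

theorem testRisk_smul_add_smul_measure {Q₀ Q₁ : Measure Ω} [IsFiniteMeasure P₀]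
    [IsFiniteMeasure P₁] [IsFiniteMeasure Q₀] [IsFiniteMeasure Q₁] (hφ : IsTest φ) (s t : ℝ≥0) :
    testRisk a b (s • P₀ + t • Q₀) (s • P₁ + t • Q₁) φ
      = s * testRisk a b P₀ P₁ φ + t * testRisk a b Q₀ Q₁ φ := by
  simp only [testRisk]
  rw [integral_add_measure (hφ.integrable _) (hφ.integrable _),
    integral_add_measure (hφ.one_sub.integrable _) (hφ.one_sub.integrable _)]
  simp only [integral_smul_nnreal_measure, NNReal.smul_def, smul_eq_mul]
  ring

theorem testRisk_smul_add_smul [IsFiniteMeasure P₀] [IsFiniteMeasure P₁] {χ : Ω → ℝ}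
    (hφ : IsTest φ) (hχ : IsTest χ) {s t : ℝ} (hst : s + t = 1) :
    testRisk a b P₀ P₁ (s • φ + t • χ)
      = s * testRisk a b P₀ P₁ φ + t * testRisk a b P₀ P₁ χ := by
  have hone (x : Ω) : 1 - (s • φ + t • χ) x = s * (1 - φ x) + t * (1 - χ x) := by
    simp only [Pi.add_apply, Pi.smul_apply, smul_eq_mul]
    linear_combination -hst
  simp only [testRisk, hone]
  rw [integral_add' ((hφ.integrable P₀).smul s) ((hχ.integrable P₀).smul t),
    integral_add ((hφ.one_sub.integrable P₁).const_mul s)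
      ((hχ.one_sub.integrable P₁).const_mul t)]
  simp only [Pi.smul_apply, integral_const_mul, smul_eq_mul]
  ring

end Tests

section LikelihoodRatio

variable {Ω : Type*} [MeasurableSpace Ω] {a b : ℝ} {P₀ P₁ μ : Measure Ω}

/-- The Bayes risk of the weighted pair `(P₀, P₁)`: the least risk of a test against this pair,
written in terms of the densities with respect to a dominating measure `μ`. -/
noncomputable def bayesRisk (μ : Measure Ω) (a b : ℝ)
    (P₀ P₁ : Measure Ω) : ℝ :=
  ∫ x, min (a * (P₀.rnDeriv μ x).toReal) (b * (P₁.rnDeriv μ x).toReal) ∂μ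

theorem IsTest.integrable_weighted_rnDeriv_mul {P : Measure Ω} [IsFiniteMeasure P]
    [P.HaveLebesgueDecomposition μ] (hP : P ≪ μ) {φ : Ω → ℝ} (hφ : IsTest φ) (c : ℝ) :
    Integrable (fun x => c * (P.rnDeriv μ x).toReal * φ x) μ := by
  simpa only [mul_assoc] using
    ((integrable_toReal_rnDeriv_mul_iff hP).2 (hφ.integrable P)).const_mul c

variable [IsFiniteMeasure P₀] [IsFiniteMeasure P₁] [P₀.HaveLebesgueDecomposition μ]
  [P₁.HaveLebesgueDecomposition μ]

theorem testRisk_eq_integral_rnDeriv (h₀ : P₀ ≪ μ) (h₁ : P₁ ≪ μ) {φ : Ω → ℝ} (hφ : IsTest φ) :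
    testRisk a b P₀ P₁ φ = ∫ x, (a * (P₀.rnDeriv μ x).toReal * φ x
      + b * (P₁.rnDeriv μ x).toReal * (1 - φ x)) ∂μ := by
  rw [integral_add (hφ.integrable_weighted_rnDeriv_mul h₀ a)
    (hφ.one_sub.integrable_weighted_rnDeriv_mul h₁ b)]
  simp only [mul_assoc, integral_const_mul, integral_toReal_rnDeriv_mul h₀,
    integral_toReal_rnDeriv_mul h₁, testRisk]

theorem bayesRisk_le_testRisk (h₀ : P₀ ≪ μ) (h₁ : P₁ ≪ μ) {φ : Ω → ℝ} (hφ : IsTest φ) :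
    bayesRisk μ a b P₀ P₁ ≤ testRisk a b P₀ P₁ φ := by
  rw [testRisk_eq_integral_rnDeriv h₀ h₁ hφ]
  refine integral_mono ((Measure.integrable_toReal_rnDeriv.const_mul a).inf
    (Measure.integrable_toReal_rnDeriv.const_mul b))
    ((hφ.integrable_weighted_rnDeriv_mul h₀ a).add
      (hφ.one_sub.integrable_weighted_rnDeriv_mul h₁ b)) fun x => ?_
  have hx := hφ.mem_Icc x
  calc min (a * (P₀.rnDeriv μ x).toReal) (b * (P₁.rnDeriv μ x).toReal)
      ≤ φ x • (a * (P₀.rnDeriv μ x).toReal) + (1 - φ x) • (b * (P₁.rnDeriv μ x).toReal) :=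
        Convex.min_le_combo _ _ hx.1 (sub_nonneg.2 hx.2) (add_sub_cancel _ _)
    _ = _ := by simp only [smul_eq_mul, mul_comm]

theorem exists_isTest_testRisk_eq_bayesRisk (h₀ : P₀ ≪ μ) (h₁ : P₁ ≪ μ) :
    ∃ φ, IsTest φ ∧ testRisk a b P₀ P₁ φ = bayesRisk μ a b P₀ P₁ := by
  let A := {x | a * (P₀.rnDeriv μ x).toReal ≤ b * (P₁.rnDeriv μ x).toReal}
  have hA : MeasurableSet A := measurableSet_le (by fun_prop) (by fun_prop)
  have hφ : IsTest (A.indicator 1) :=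
    ⟨measurable_one.indicator hA, fun x =>
      ⟨indicator_nonneg (fun _ _ => zero_le_one) x, indicator_le_self' (fun _ _ => zero_le_one) x⟩⟩
  refine ⟨A.indicator 1, hφ, ?_⟩
  rw [testRisk_eq_integral_rnDeriv h₀ h₁ hφ]
  refine integral_congr_ae (.of_forall fun x => ?_)
  by_cases hx : x ∈ A
  · simp [hx, min_eq_left hx.out]
  · have hlt : b * (P₁.rnDeriv μ x).toReal < a * (P₀.rnDeriv μ x).toReal := not_le.1 hx
    simp [hx, min_eq_right hlt.le]

end LikelihoodRatio

section Exchange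

variable {Ω : Type*} [MeasurableSpace Ω] {a b : ℝ}

theorem convex_image2_testRisk {𝒫₀ 𝒫₁ : Set (ProbabilityMeasure Ω)}
    (hconv₀ : Convex ℝ≥0 ((↑) '' 𝒫₀ : Set (Measure Ω)))
    (hconv₁ : Convex ℝ≥0 ((↑) '' 𝒫₁ : Set (Measure Ω))) {ι : Type*} {φ : ι → Ω → ℝ}
    (hφ : ∀ i, IsTest (φ i)) :
    Convex ℝ (image2 (fun (P₀ P₁ : ProbabilityMeasure Ω) i => testRisk a b P₀ P₁ (φ i)) 𝒫₀ 𝒫₁) := by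
  rintro _ ⟨P₀, hP₀, P₁, hP₁, rfl⟩ _ ⟨Q₀, hQ₀, Q₁, hQ₁, rfl⟩ s t hs ht hst
  lift s to ℝ≥0 using hs
  lift t to ℝ≥0 using ht
  norm_cast at hst
  obtain ⟨R₀, hR₀, hR₀eq⟩ := hconv₀ (mem_image_of_mem _ hP₀) (mem_image_of_mem _ hQ₀)
    zero_le zero_le hst
  obtain ⟨R₁, hR₁, hR₁eq⟩ := hconv₁ (mem_image_of_mem _ hP₁) (mem_image_of_mem _ hQ₁)
    zero_le zero_le hst
  refine ⟨R₀, hR₀, R₁, hR₁, funext fun i => ?_⟩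
  calc testRisk a b R₀ R₁ (φ i)
      = testRisk a b (s • P₀ + t • Q₀ : Measure Ω) (s • P₁ + t • Q₁ : Measure Ω) (φ i) := by
        rw [hR₀eq, hR₁eq]
    _ = s * testRisk a b P₀ P₁ (φ i) + t * testRisk a b Q₀ Q₁ (φ i) :=
        testRisk_smul_add_smul_measure (hφ i) s t

section Lp

variable {p : ℝ≥0∞} {P₀ P₁ ν : Measure Ω} [IsFiniteMeasure P₀] [IsFiniteMeasure P₁]

theorem continuous_testRisk_unitClip_Lp [Fact (1 ≤ p)] (h₀ : P₀ ≪ ν) (h₁ : P₁ ≪ ν) :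
    Continuous fun φ : Lp ℝ p ν => testRisk a b P₀ P₁ (unitClip φ) := by
  let g (y : ℝ) : ℝ := projIcc (0 : ℝ) 1 zero_le_one y
  have hg : Continuous g := continuous_subtype_val.comp continuous_projIcc
  have hmem (y : ℝ) : g y ∈ Icc (0 : ℝ) 1 := (projIcc (0 : ℝ) 1 zero_le_one y).2
  have hbound {r : ℝ} (hr : r ∈ Icc (0 : ℝ) 1) : ‖r‖ ≤ 1 := (Real.norm_of_nonneg hr.1).trans_le hr.2
  exact ((continuous_integral_comp_Lp h₀ hg fun y => hbound (hmem y)).const_mul a).add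
    ((continuous_integral_comp_Lp h₁ (continuous_const.sub hg) fun y =>
      hbound (Icc.one_sub_mem (hmem y))).const_mul b)

theorem convexOn_testRisk_unitClip_Lp (h₀ : P₀ ≪ ν) (h₁ : P₁ ≪ ν) :
    ConvexOn ℝ {φ : Lp ℝ p ν | ∀ᵐ x ∂ν, φ x ∈ Icc (0 : ℝ) 1}
      fun φ => testRisk a b P₀ P₁ (unitClip φ) := by
  have hconv := convex_ae_mem_Lp (p := p) (ν := ν) (convex_Icc (0 : ℝ) 1)
  refine ⟨hconv, fun φ hφ χ hχ s t hs ht hst => le_of_eq ?_⟩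
  have hclip : unitClip (s • φ + t • χ : Lp ℝ p ν) =ᵐ[ν] s • unitClip φ + t • unitClip χ := by
    filter_upwards [unitClip_ae_eq hφ, unitClip_ae_eq hχ, unitClip_ae_eq (hconv hφ hχ hs ht hst),
      Lp.coeFn_add (s • φ) (t • χ), Lp.coeFn_smul s φ, Lp.coeFn_smul t χ]
      with x hφx hχx hx hadd hsφ htχ
    simp only [hx, hadd, Pi.add_apply, hsφ, htχ, Pi.smul_apply, hφx, hχx]
  refine (testRisk_congr_ae (h₀.ae_le hclip) (h₁.ae_le hclip)).trans ?_
  exact testRisk_smul_add_smul (isTest_unitClip (Lp.stronglyMeasurable φ).measurable)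
    (isTest_unitClip (Lp.stronglyMeasurable χ).measurable) hst

end Lp

theorem IsTest.exists_Lp_unitClip_ae_eq {p : ℝ≥0∞} {ν : Measure Ω} [IsFiniteMeasure ν] {φ : Ω → ℝ}
    (hφ : IsTest φ) : ∃ χ : Lp ℝ p ν, (∀ᵐ x ∂ν, χ x ∈ Icc (0 : ℝ) 1) ∧ unitClip χ =ᵐ[ν] φ := by
  have hmem : MemLp φ p ν := .of_bound hφ.measurable.aestronglyMeasurable 1
    (.of_forall fun x => (Real.norm_of_nonneg (hφ.mem_Icc x).1).trans_le (hφ.mem_Icc x).2)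
  have hIcc : ∀ᵐ x ∂ν, hmem.toLp φ x ∈ Icc (0 : ℝ) 1 :=
    hmem.coeFn_toLp.mono fun x hx => hx ▸ hφ.mem_Icc x
  exact ⟨hmem.toLp φ, hIcc, (unitClip_ae_eq hIcc).trans hmem.coeFn_toLp⟩

theorem exists_forall_isTest_lt_testRisk {μ : Measure Ω} [SFinite μ]
    {𝒫₀ 𝒫₁ : Set (ProbabilityMeasure Ω)}
    (hconv₀ : Convex ℝ≥0 ((↑) '' 𝒫₀ : Set (Measure Ω)))
    (hconv₁ : Convex ℝ≥0 ((↑) '' 𝒫₁ : Set (Measure Ω)))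
    (h₀ : ∀ P ∈ 𝒫₀, (P : Measure Ω) ≪ μ) (h₁ : ∀ P ∈ 𝒫₁, (P : Measure Ω) ≪ μ) {c : ℝ}
    (h : ∀ φ : Ω → ℝ, IsTest φ → ∃ P₀ ∈ 𝒫₀, ∃ P₁ ∈ 𝒫₁, c < testRisk a b P₀ P₁ φ) :
    ∃ P₀ ∈ 𝒫₀, ∃ P₁ ∈ 𝒫₁, ∀ φ : Ω → ℝ, IsTest φ → c < testRisk a b P₀ P₁ φ := by
  let ν := μ.toFinite
  let T : Set (Lp ℝ 2 ν) := {φ | ∀ᵐ x ∂ν, φ x ∈ Icc (0 : ℝ) 1}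
  have hν {P : Measure Ω} (hP : P ≪ μ) : P ≪ ν := hP.trans (absolutelyContinuous_toFinite μ)
  have hclip (φ : Lp ℝ 2 ν) : IsTest (unitClip φ) :=
    isTest_unitClip (Lp.stronglyMeasurable φ).measurable
  have hne : T.Nonempty := IsTest.zero.exists_Lp_unitClip_ae_eq.imp fun _ hχ => hχ.1
  let 𝓕 : Set (Lp ℝ 2 ν → ℝ) := image2
    (fun (P₀ P₁ : ProbabilityMeasure Ω) χ => testRisk a b P₀ P₁ (unitClip χ)) 𝒫₀ 𝒫₁
  have h𝓕 : Convex ℝ 𝓕 := convex_image2_testRisk hconv₀ hconv₁ hclip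
  have hlsc : ∀ f ∈ 𝓕, LowerSemicontinuousOn f T := forall_mem_image2.2 fun P₀ hP₀ P₁ hP₁ =>
    (continuous_testRisk_unitClip_Lp (hν (h₀ P₀ hP₀))
      (hν (h₁ P₁ hP₁))).lowerSemicontinuous.lowerSemicontinuousOn T
  have hquasi : ∀ f ∈ 𝓕, QuasiconvexOn ℝ T f := forall_mem_image2.2 fun P₀ hP₀ P₁ hP₁ =>
    (convexOn_testRisk_unitClip_Lp (hν (h₀ P₀ hP₀)) (hν (h₁ P₁ hP₁))).quasiconvexOn
  obtain ⟨_, ⟨P₀, hP₀, P₁, hP₁, rfl⟩, hlt⟩ := exists_mem_forall_lt_of_isClosed_of_isBounded hne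
    (convex_ae_mem_Lp (convex_Icc 0 1)) (isClosed_ae_mem_Lp isClosed_Icc)
    (isBounded_ae_mem_Lp (Metric.isBounded_Icc 0 1)) h𝓕 hlsc hquasi fun χ _ =>
      let ⟨P₀, hP₀, P₁, hP₁, hlt⟩ := h _ (hclip χ)
      ⟨_, mem_image2_of_mem hP₀ hP₁, hlt⟩
  refine ⟨P₀, hP₀, P₁, hP₁, fun φ hφ => ?_⟩
  obtain ⟨χ, hχ, heq⟩ := hφ.exists_Lp_unitClip_ae_eq (p := 2) (ν := ν)
  exact (hlt χ hχ).trans_eq (testRisk_congr_ae ((hν (h₀ P₀ hP₀)).ae_le heq)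
    ((hν (h₁ P₁ hP₁)).ae_le heq))

end Exchange

section Minimax

variable {Ω : Type*} [MeasurableSpace Ω] {a b : ℝ} {𝒫₀ 𝒫₁ : Set (ProbabilityMeasure Ω)}

/-- The largest risk of the test `φ` against a pair from `𝒫₀ × 𝒫₁`. -/
noncomputable def worstRisk (a b : ℝ) (𝒫₀ 𝒫₁ : Set (ProbabilityMeasure Ω)) (φ : Ω → ℝ) : ℝ :=
  sSup {e | ∃ P₀ ∈ 𝒫₀, ∃ P₁ ∈ 𝒫₁, e = testRisk a b P₀ P₁ φ}

theorem testRisk_le_worstRisk {P₀ P₁ : ProbabilityMeasure Ω} (hP₀ : P₀ ∈ 𝒫₀) (hP₁ : P₁ ∈ 𝒫₁)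
    {φ : Ω → ℝ} (hφ : IsTest φ) : testRisk a b P₀ P₁ φ ≤ worstRisk a b 𝒫₀ 𝒫₁ φ := by
  refine le_csSup ⟨|a| + |b|, ?_⟩ ⟨P₀, hP₀, P₁, hP₁, rfl⟩
  rintro _ ⟨Q₀, -, Q₁, -, rfl⟩
  exact (le_abs_self _).trans (abs_testRisk_le hφ)

theorem exists_lt_testRisk_of_lt_worstRisk (hne₀ : 𝒫₀.Nonempty) (hne₁ : 𝒫₁.Nonempty)
    {φ : Ω → ℝ} {c : ℝ} (h : c < worstRisk a b 𝒫₀ 𝒫₁ φ) :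
    ∃ P₀ ∈ 𝒫₀, ∃ P₁ ∈ 𝒫₁, c < testRisk a b P₀ P₁ φ := by
  obtain ⟨Q₀, hQ₀⟩ := hne₀
  obtain ⟨Q₁, hQ₁⟩ := hne₁
  have hne : {e | ∃ P₀ ∈ 𝒫₀, ∃ P₁ ∈ 𝒫₁, e = testRisk a b P₀ P₁ φ}.Nonempty :=
    ⟨_, Q₀, hQ₀, Q₁, hQ₁, rfl⟩
  obtain ⟨_, ⟨P₀, hP₀, P₁, hP₁, rfl⟩, hlt⟩ := exists_lt_of_lt_csSup hne h
  exact ⟨P₀, hP₀, P₁, hP₁, hlt⟩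

/-- The families are convex as sets of measures: `ProbabilityMeasure Ω` has no addition, so convex
combinations are taken in `Measure Ω`, with coefficients in `ℝ≥0`. -/
theorem minimax_unequal_priors_general (a b : ℝ) {μ : Measure Ω} [SigmaFinite μ]
    (hne₀ : 𝒫₀.Nonempty) (hne₁ : 𝒫₁.Nonempty)
    (hconv₀ : Convex ℝ≥0 ((↑) '' 𝒫₀ : Set (Measure Ω)))
    (hconv₁ : Convex ℝ≥0 ((↑) '' 𝒫₁ : Set (Measure Ω)))
    (h₀ : ∀ P ∈ 𝒫₀, (P : Measure Ω) ≪ μ) (h₁ : ∀ P ∈ 𝒫₁, (P : Measure Ω) ≪ μ) :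
    sInf {r | ∃ φ : Ω → ℝ, Measurable φ ∧ (∀ x, φ x ∈ Icc (0 : ℝ) 1) ∧
        r = worstRisk a b 𝒫₀ 𝒫₁ φ} =
      sSup {r | ∃ P₀ ∈ 𝒫₀, ∃ P₁ ∈ 𝒫₁, r = bayesRisk μ a b P₀ P₁} := by
  set worstRisks := {r | ∃ φ : Ω → ℝ, Measurable φ ∧ (∀ x, φ x ∈ Icc (0 : ℝ) 1) ∧
    r = worstRisk a b 𝒫₀ 𝒫₁ φ}
  set bayesRisks := {r | ∃ P₀ ∈ 𝒫₀, ∃ P₁ ∈ 𝒫₁, r = bayesRisk μ a b P₀ P₁}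
  have hworst : worstRisks.Nonempty := ⟨_, 0, IsTest.zero.measurable, IsTest.zero.mem_Icc, rfl⟩
  have hbayes : bayesRisks.Nonempty :=
    let ⟨P₀, hP₀⟩ := hne₀; let ⟨P₁, hP₁⟩ := hne₁; ⟨_, P₀, hP₀, P₁, hP₁, rfl⟩
  have hweak : ∀ r ∈ bayesRisks, ∀ r' ∈ worstRisks, r ≤ r' := by
    rintro _ ⟨P₀, hP₀, P₁, hP₁, rfl⟩ _ ⟨φ, hφ, hφ01, rfl⟩
    exact (bayesRisk_le_testRisk (h₀ P₀ hP₀) (h₁ P₁ hP₁) ⟨hφ, hφ01⟩).trans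
      (testRisk_le_worstRisk hP₀ hP₁ ⟨hφ, hφ01⟩)
  refine le_antisymm (le_of_forall_lt fun c hc => ?_)
    (csSup_le hbayes fun r hr => le_csInf hworst (hweak r hr))
  obtain ⟨P₀, hP₀, P₁, hP₁, hlt⟩ := exists_forall_isTest_lt_testRisk hconv₀ hconv₁ h₀ h₁
    fun φ hφ => exists_lt_testRisk_of_lt_worstRisk hne₀ hne₁ <|
      hc.trans_le (csInf_le (hbayes.mono hweak) ⟨φ, hφ.measurable, hφ.mem_Icc, rfl⟩)
  obtain ⟨φ, hφ, hmin⟩ :=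
    exists_isTest_testRisk_eq_bayesRisk (a := a) (b := b) (h₀ P₀ hP₀) (h₁ P₁ hP₁)
  calc c < testRisk a b P₀ P₁ φ := hlt φ hφ
    _ ≤ sSup bayesRisks :=
      le_csSup (hworst.mono fun r' hr' r hr => hweak r hr r' hr') ⟨P₀, hP₀, P₁, hP₁, hmin⟩

end Minimax

section MomentSet

variable {d K : ℕ} {X : Set (EuclideanSpace ℝ (Fin d))} {ψ : Fin K → X → ℝ}
  {Q : ProbabilityMeasure X} {η : ℝ}

theorem self_mem_momentSet (hη : 0 ≤ η) : Q ∈ momentSet X ψ Q η := fun k => by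
  rwa [sub_self, abs_zero]

theorem convex_momentSet (hX : IsCompact X) (hψ : ∀ k, Continuous (ψ k)) :
    Convex ℝ≥0 ((↑) '' momentSet X ψ Q η : Set (Measure X)) := by
  rintro _ ⟨P, hP, rfl⟩ _ ⟨P', hP', rfl⟩ s t - - hst
  have : CompactSpace X := isCompact_iff_compactSpace.1 hX
  have hint (P : ProbabilityMeasure X) (k : Fin K) : Integrable (ψ k) (P : Measure X) :=
    (hψ k).integrable_of_hasCompactSupport (.of_compactSpace _)
  have hprob : IsProbabilityMeasure (s • P + t • P' : Measure X) := ⟨by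
    simp [← ENNReal.coe_add, hst]⟩
  refine ⟨⟨_, hprob⟩, fun k => ?_, rfl⟩
  have hmean : ∫ x, ψ k x ∂(s • P + t • P' : Measure X)
      = (s : ℝ) • ∫ x, ψ k x ∂(P : Measure X) + (t : ℝ) • ∫ x, ψ k x ∂(P' : Measure X) := by
    rw [integral_add_measure ((hint P k).smul_measure_nnreal) ((hint P' k).smul_measure_nnreal),
      integral_smul_nnreal_measure, integral_smul_nnreal_measure]
    rfl
  have hball := convex_closedBall (∫ x, ψ k x ∂(Q : Measure X)) η (hP k) (hP' k) s.2 t.2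
    (congrArg NNReal.toReal hst)
  rw [Metric.mem_closedBall, Real.dist_eq] at hball
  exact hmean ▸ hball

end MomentSet

/-- For priors `π₀ ∈ (0,1)` and `1 − π₀`, the minimax error with error
probability `P_E^{π₀}(φ; P₀, P₁) = π₀ E_{P₀}[φ] + (1 − π₀) E_{P₁}[1 − φ]` equals the
worst case of `∫ min{π₀ p₀, (1 − π₀) p₁} dμ`, where `p_i` is the density (Radon–Nikodym
derivative) of `P_i` with respect to the common reference measure `μ`. -/
theorem minimax_unequal_priors
    {d : ℕ} (X : Set (EuclideanSpace ℝ (Fin d))) (hX : IsCompact X)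
    {K : ℕ} (ψ : Fin K → X → ℝ) (hψ : ∀ k, Continuous (ψ k))
    (Q0 Q1 : ProbabilityMeasure X) (η : ℝ) (hη : 0 < η)
    (μ : Measure X) [SigmaFinite μ]
    (hAC : ∀ P : ProbabilityMeasure X,
      P ∈ momentSet X ψ Q0 η ∪ momentSet X ψ Q1 η → (P : Measure X) ≪ μ)
    (π0 : ℝ) (hπ0 : π0 ∈ Set.Ioo (0 : ℝ) 1) :
    sInf {r : ℝ | ∃ φ : X → ℝ, Measurable φ ∧ (∀ x, φ x ∈ Set.Icc (0 : ℝ) 1) ∧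
        r = sSup {e : ℝ | ∃ P0 ∈ momentSet X ψ Q0 η, ∃ P1 ∈ momentSet X ψ Q1 η,
          e = π0 * ∫ x, φ x ∂(P0 : Measure X)
            + (1 - π0) * ∫ x, (1 - φ x) ∂(P1 : Measure X)}} =
      sSup {r : ℝ | ∃ P0 ∈ momentSet X ψ Q0 η, ∃ P1 ∈ momentSet X ψ Q1 η,
        r = ∫ x, min (π0 * ((P0 : Measure X).rnDeriv μ x).toReal)
          ((1 - π0) * ((P1 : Measure X).rnDeriv μ x).toReal) ∂μ} :=
  minimax_unequal_priors_general π0 (1 - π0) ⟨Q0, self_mem_momentSet hη.le⟩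
    ⟨Q1, self_mem_momentSet hη.le⟩ (convex_momentSet hX hψ) (convex_momentSet hX hψ)
    (fun P hP => hAC P (.inl hP)) fun P hP => hAC P (.inr hP)
end

section
/- (Lemma 1.) The function g(η) = sup_{P_0 ∈ 𝒫_0^η, P_1 ∈ 𝒫_1^η} (1 − TV(P_0, P_1)) is concave in η on the open interval (0, η_max), where η_max = max_{k} |E_{Q̂_1}[ψ_k] − E_{Q̂_0}[ψ_k]| / 2. -/
open MeasureTheory

/-- The total variation distance between two measures:
`TV(P, Q) = sup over measurable sets A of |P(A) − Q(A)|`. -/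
noncomputable def tv {Ω : Type*} [MeasurableSpace Ω] (P Q : Measure Ω) : ℝ :=
  ⨆ A : {A : Set Ω // MeasurableSet A}, |(P A.1).toReal - (Q A.1).toReal|

/-!
Mixing two feasible pairs `(P₀, P₁)` and `(P₀', P₁')` for radii `η` and `η'` with weights `a` and
`b` gives a feasible pair for the radius `a η + b η'`, because moments are affine in the measure.
Total variation is jointly convex, so the affinity of the mixed pair is at least the same weighted
average of the two affinities; taking suprema over both pairs gives concavity.
-/

open scoped NNReal Pointwise

theorem concaveOn_sSup_of_isCofinalFor {E : Type*} [AddCommMonoid E] [SMul ℝ E] {s : Set E}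
    {S : E → Set ℝ} (hs : Convex ℝ s) (hne : ∀ x ∈ s, (S x).Nonempty)
    (hbdd : ∀ x ∈ s, BddAbove (S x))
    (hS : ∀ x ∈ s, ∀ y ∈ s, ∀ a b : ℝ, 0 ≤ a → 0 ≤ b → a + b = 1 →
      IsCofinalFor (a • S x + b • S y) (S (a • x + b • y))) :
    ConcaveOn ℝ s fun x => sSup (S x) := by
  refine ⟨hs, fun x hx y hy a b ha hb hab => ?_⟩
  have hne_x : (a • S x).Nonempty := (hne x hx).smul_set
  have hne_y : (b • S y).Nonempty := (hne y hy).smul_set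
  calc a • sSup (S x) + b • sSup (S y)
      = sSup (a • S x + b • S y) := by
        rw [csSup_add hne_x ((hbdd x hx).smul_of_nonneg ha) hne_y
          ((hbdd y hy).smul_of_nonneg hb), Real.sSup_smul_of_nonneg ha,
          Real.sSup_smul_of_nonneg hb]
    _ ≤ sSup (S (a • x + b • y)) := by
        refine csSup_le (hne_x.add hne_y) fun r hr => ?_
        obtain ⟨t, ht, hrt⟩ := hS x hx y hy a b ha hb hab hr
        exact hrt.trans (le_csSup (hbdd _ (hs hx hy ha hb hab)) ht)

theorem abs_mul_add_mul_sub_le {R : Type*} [CommRing R] [LinearOrder R]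
    [IsStrictOrderedRing R] {a b : R} (ha : 0 ≤ a) (hb : 0 ≤ b) (p p' q q' : R) :
    |(a * p + b * p') - (a * q + b * q')| ≤ a * |p - q| + b * |p' - q'| :=
  calc |(a * p + b * p') - (a * q + b * q')|
      = |a * (p - q) + b * (p' - q')| := by ring_nf
    _ ≤ |a * (p - q)| + |b * (p' - q')| := abs_add_le _ _
    _ = a * |p - q| + b * |p' - q'| := by
        rw [abs_mul, abs_mul, abs_of_nonneg ha, abs_of_nonneg hb]

section TotalVariation

variable {Ω : Type*} [MeasurableSpace Ω]

theorem tv_nonneg (P Q : Measure Ω) : 0 ≤ tv P Q :=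
  Real.iSup_nonneg fun _ => abs_nonneg _

theorem abs_measureReal_sub_le_tv (P Q : Measure Ω) [IsFiniteMeasure P] [IsFiniteMeasure Q]
    {A : Set Ω} (hA : MeasurableSet A) : |P.real A - Q.real A| ≤ tv P Q := by
  refine le_ciSup (f := fun A : {A : Set Ω // MeasurableSet A} => |P.real A.1 - Q.real A.1|)
    ⟨max (P.real Set.univ) (Q.real Set.univ), ?_⟩ ⟨A, hA⟩
  rintro _ ⟨B, rfl⟩
  exact abs_sub_le_of_nonneg_of_le measureReal_nonneg
    (le_max_of_le_left (measureReal_mono (Set.subset_univ _))) measureReal_nonneg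
    (le_max_of_le_right (measureReal_mono (Set.subset_univ _)))

theorem tv_nnreal_smul_add_le (a b : ℝ≥0) (P P' Q Q' : Measure Ω) [IsFiniteMeasure P]
    [IsFiniteMeasure P'] [IsFiniteMeasure Q] [IsFiniteMeasure Q'] :
    tv (a • P + b • P') (a • Q + b • Q') ≤ a * tv P Q + b * tv P' Q' := by
  have : Nonempty {A : Set Ω // MeasurableSet A} := ⟨⟨∅, MeasurableSet.empty⟩⟩
  refine ciSup_le fun ⟨A, hA⟩ => ?_
  change |(a • P + b • P').real A - (a • Q + b • Q').real A| ≤ _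
  rw [measureReal_add_apply, measureReal_add_apply, measureReal_nnreal_smul_apply,
    measureReal_nnreal_smul_apply, measureReal_nnreal_smul_apply, measureReal_nnreal_smul_apply]
  calc |(a * P.real A + b * P'.real A) - (a * Q.real A + b * Q'.real A)|
      ≤ a * |P.real A - Q.real A| + b * |P'.real A - Q'.real A| :=
        abs_mul_add_mul_sub_le a.2 b.2 _ _ _ _
    _ ≤ a * tv P Q + b * tv P' Q' := by
        gcongr <;> exact abs_measureReal_sub_le_tv _ _ hA

end TotalVariation

section MomentBall

variable {Ω ι : Type*} [MeasurableSpace Ω]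

/-- The convex combination `a P + b P'` of two probability measures, used to average feasible
measures. The weights lie in `ℝ≥0` because measures can be scaled only by nonnegative numbers. -/
noncomputable def mixture (a b : ℝ≥0) (hab : a + b = 1) (P P' : ProbabilityMeasure Ω) :
    ProbabilityMeasure Ω :=
  ⟨a • (P : Measure Ω) + b • (P' : Measure Ω),
    ⟨by
      rw [Measure.add_apply, Measure.smul_apply, Measure.smul_apply, measure_univ, measure_univ,
        ← add_smul, hab, one_smul]⟩⟩

/-- The moment-constrained uncertainty set `momentSet` over an arbitrary measurable space and for
an arbitrary family of moment functions; `momentSet X ψ` unfolds to `momentBall ψ`. -/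
def momentBall (ψ : ι → Ω → ℝ) (Q : ProbabilityMeasure Ω) (η : ℝ) : Set (ProbabilityMeasure Ω) :=
  {P | ∀ k, |∫ x, ψ k x ∂(P : Measure Ω) - ∫ x, ψ k x ∂(Q : Measure Ω)| ≤ η}

/-- The affinities `1 - TV(P₀, P₁)` of all pairs of measures from the moment balls of radius `η`
around `Q0` and `Q1`; the worst-case affinity is the supremum of this set. -/
def affinities (ψ : ι → Ω → ℝ) (Q0 Q1 : ProbabilityMeasure Ω) (η : ℝ) : Set ℝ :=
  {r | ∃ P0 ∈ momentBall ψ Q0 η, ∃ P1 ∈ momentBall ψ Q1 η,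
    r = 1 - tv (P0 : Measure Ω) (P1 : Measure Ω)}

variable {ψ : ι → Ω → ℝ} {Q Q0 Q1 : ProbabilityMeasure Ω} {η : ℝ}

theorem self_mem_momentBall (hη : 0 ≤ η) : Q ∈ momentBall ψ Q η := fun k => by
  simpa only [sub_self, abs_zero] using hη

theorem integral_mixture {f : Ω → ℝ} {a b : ℝ≥0} (hab : a + b = 1) {P P' : ProbabilityMeasure Ω}
    (hP : Integrable f (P : Measure Ω)) (hP' : Integrable f (P' : Measure Ω)) :
    ∫ x, f x ∂(mixture a b hab P P' : Measure Ω)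
      = a * ∫ x, f x ∂(P : Measure Ω) + b * ∫ x, f x ∂(P' : Measure Ω) := by
  change ∫ x, f x ∂(a • (P : Measure Ω) + b • (P' : Measure Ω)) = _
  rw [integral_add_measure hP.smul_measure_nnreal hP'.smul_measure_nnreal,
    integral_smul_nnreal_measure, integral_smul_nnreal_measure, NNReal.smul_def, NNReal.smul_def,
    smul_eq_mul, smul_eq_mul]

theorem mixture_mem_momentBall {a b : ℝ≥0} (hab : a + b = 1) {P P' : ProbabilityMeasure Ω}
    {η' : ℝ} (hint : ∀ k, Integrable (ψ k) (P : Measure Ω))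
    (hint' : ∀ k, Integrable (ψ k) (P' : Measure Ω)) (hP : P ∈ momentBall ψ Q η)
    (hP' : P' ∈ momentBall ψ Q η') :
    mixture a b hab P P' ∈ momentBall ψ Q (a * η + b * η') := by
  intro k
  set m := ∫ x, ψ k x ∂(Q : Measure Ω)
  have hm : m = a * m + b * m := by
    rw [← add_mul, ← NNReal.coe_add, hab, NNReal.coe_one, one_mul]
  rw [integral_mixture hab (hint k) (hint' k), hm]
  exact (abs_mul_add_mul_sub_le a.2 b.2 _ _ _ _).trans
    (add_le_add (mul_le_mul_of_nonneg_left (hP k) a.2) (mul_le_mul_of_nonneg_left (hP' k) b.2))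

theorem affinities_nonempty (hη : 0 ≤ η) : (affinities ψ Q0 Q1 η).Nonempty :=
  ⟨_, Q0, self_mem_momentBall hη, Q1, self_mem_momentBall hη, rfl⟩

theorem bddAbove_affinities : BddAbove (affinities ψ Q0 Q1 η) := by
  refine ⟨1, ?_⟩
  rintro _ ⟨P0, -, P1, -, rfl⟩
  exact sub_le_self 1 (tv_nonneg _ _)

theorem isCofinalFor_smul_add_smul_affinities
    (hψ : ∀ k (P : ProbabilityMeasure Ω), Integrable (ψ k) (P : Measure Ω)) {a b : ℝ≥0}
    (hab : a + b = 1) {η' : ℝ} :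
    IsCofinalFor ((a : ℝ) • affinities ψ Q0 Q1 η + (b : ℝ) • affinities ψ Q0 Q1 η')
      (affinities ψ Q0 Q1 (a * η + b * η')) := by
  rintro _ ⟨_, ⟨_, ⟨P0, hP0, P1, hP1, rfl⟩, rfl⟩, _, ⟨_, ⟨P0', hP0', P1', hP1', rfl⟩, rfl⟩, rfl⟩
  refine ⟨_, ⟨mixture a b hab P0 P0',
    mixture_mem_momentBall hab (hψ · P0) (hψ · P0') hP0 hP0', mixture a b hab P1 P1',
    mixture_mem_momentBall hab (hψ · P1) (hψ · P1') hP1 hP1', rfl⟩, ?_⟩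
  have htv : tv (mixture a b hab P0 P0' : Measure Ω) (mixture a b hab P1 P1' : Measure Ω)
      ≤ a * tv (P0 : Measure Ω) (P1 : Measure Ω) + b * tv (P0' : Measure Ω) (P1' : Measure Ω) :=
    tv_nnreal_smul_add_le a b _ _ _ _
  have hab' : (a : ℝ) + b = 1 := mod_cast hab
  simp only [smul_eq_mul]
  linarith only [htv, hab']

end MomentBall

theorem worst_case_affinity_concave_general {Ω ι : Type*} [MeasurableSpace Ω] {ψ : ι → Ω → ℝ}
    (hψ : ∀ k (P : ProbabilityMeasure Ω), Integrable (ψ k) (P : Measure Ω))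
    (Q0 Q1 : ProbabilityMeasure Ω) :
    ConcaveOn ℝ (Set.Ici 0) fun η => sSup (affinities ψ Q0 Q1 η) := by
  refine concaveOn_sSup_of_isCofinalFor (convex_Ici 0) (fun _ hη => affinities_nonempty hη)
    (fun _ _ => bddAbove_affinities) fun η _ η' _ a b ha hb hab => ?_
  lift a to ℝ≥0 using ha
  lift b to ℝ≥0 using hb
  exact isCofinalFor_smul_add_smul_affinities hψ (mod_cast hab)

/-- **Lemma 1.** The worst-case affinity
`g(η) = sup_{P₀ ∈ 𝒫₀^η, P₁ ∈ 𝒫₁^η} (1 − TV(P₀, P₁))` is concave in `η` on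
`(0, η_max)`, where `η_max = max_k |E_{Q̂₁}[ψ_k] − E_{Q̂₀}[ψ_k]| / 2`. -/
theorem worst_case_affinity_concave
    {d : ℕ} (X : Set (EuclideanSpace ℝ (Fin d))) (hX : IsCompact X)
    {K : ℕ} (hK : 0 < K) (ψ : Fin K → X → ℝ) (hψ : ∀ k, Continuous (ψ k))
    (Q0 Q1 : ProbabilityMeasure X) :
    ConcaveOn ℝ
      (Set.Ioo 0 (⨆ k : Fin K,
        |∫ x, ψ k x ∂(Q1 : Measure X) - ∫ x, ψ k x ∂(Q0 : Measure X)| / 2))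
      (fun η => sSup {r : ℝ | ∃ P0 ∈ momentSet X ψ Q0 η, ∃ P1 ∈ momentSet X ψ Q1 η,
        r = 1 - tv (P0 : Measure X) (P1 : Measure X)}) := by
  have : CompactSpace X := isCompact_iff_compactSpace.1 hX
  have hint (k : Fin K) (P : ProbabilityMeasure X) : Integrable (ψ k) (P : Measure X) :=
    (hψ k).integrable_of_hasCompactSupport (.of_compactSpace _)
  exact (worst_case_affinity_concave_general hint Q0 Q1).subset (fun _ hη => hη.1.le)
    (convex_Ioo _ _)
end
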